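/- Let P ⊆ ℝ² be a full-dimensional lattice polygon with irredundant facet presentation h_i(p) = ⟨p,n_i⟩ + a_i ≥ 0 (i = 1,…,r) and lattice points A = P ∩ ℤ², and suppose P has strict linear precision for some positive weights w = (w_m)_{m∈A}. Then there exist a matrix M ∈ GL_2(ℤ) and a vector b ∈ ℤ² such that the image of P under the map x ↦ Mx + b equals either kΔ_2 = {(x,y) : x ≥ 0, y ≥ 0, x + y ≤ k} for some integer k ≥ 1, or the rectangle [0,k] × [0,ℓ] for some integers k, ℓ ≥ 1. -/

import Mathlib

open Finset

noncomputable section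

/-- Lattice distance function `h_i(p) = ⟨p, n_i⟩ + a_i` on `ℝ^d`. -/
def hR {d r : ℕ} (n : Fin r → Fin d → ℤ) (a : Fin r → ℤ) (i : Fin r) (p : Fin d → ℝ) : ℝ :=
  (∑ l, p l * (n i l : ℝ)) + (a i : ℝ)

/-- Lattice distance `h_i(m) = ⟨m, n_i⟩ + a_i` of a lattice point, an integer. -/
def hZ {d r : ℕ} (n : Fin r → Fin d → ℤ) (a : Fin r → ℤ) (i : Fin r) (m : Fin d → ℤ) : ℤ :=
  (∑ l, m l * n i l) + a i

/-- The polytope `P = {p : h_i(p) ≥ 0 ∀ i}`. -/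
def latticePolytope {d r : ℕ} (n : Fin r → Fin d → ℤ) (a : Fin r → ℤ) : Set (Fin d → ℝ) :=
  {p | ∀ i, 0 ≤ hR n a i p}

/-- Coercion of a lattice point of `ℤ^d` to `ℝ^d`. -/
def coeZ {d : ℕ} (m : Fin d → ℤ) : Fin d → ℝ := fun l => (m l : ℝ)

/-- Krasauskas toric blending polynomial `β_m(p) = ∏_i h_i(p)^{h_i(m)}` (with `0^0 = 1`). -/
def toricBeta {d r : ℕ} (n : Fin r → Fin d → ℤ) (a : Fin r → ℤ) (m : Fin d → ℤ)
    (p : Fin d → ℝ) : ℝ :=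
  ∏ i, hR n a i p ^ (hZ n a i m).toNat

/-- `β_w(p) = ∑_{m ∈ A} w_m β_m(p)`. -/
def toricBetaW {d r : ℕ} (n : Fin r → Fin d → ℤ) (a : Fin r → ℤ) (A : Finset (Fin d → ℤ))
    (w : (Fin d → ℤ) → ℝ) (p : Fin d → ℝ) : ℝ :=
  ∑ m ∈ A, w m * toricBeta n a m p

/-- `P` is a full-dimensional lattice polytope with irredundant facet presentation given by
`n_i, a_i` and lattice point set `A = P ∩ ℤ^d`. -/
def IsFacetPresentation {d r : ℕ} (n : Fin r → Fin d → ℤ) (a : Fin r → ℤ)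
    (A : Finset (Fin d → ℤ)) : Prop :=
  IsCompact (latticePolytope n a) ∧
  (interior (latticePolytope n a)).Nonempty ∧
  (∀ m : Fin d → ℤ, m ∈ A ↔ coeZ m ∈ latticePolytope n a) ∧
  latticePolytope n a = convexHull ℝ (coeZ '' (A : Set (Fin d → ℤ))) ∧
  (∀ i, ∃ p ∈ latticePolytope n a, hR n a i p = 0 ∧ ∀ k, k ≠ i → 0 < hR n a k p)

/-- `P` has strict linear precision for the weights `w`:
`β_w(p)·p = ∑_{m ∈ A} w_m β_m(p)·m` for all `p ∈ P`. -/
def StrictLinearPrecision {d r : ℕ} (n : Fin r → Fin d → ℤ) (a : Fin r → ℤ)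
    (A : Finset (Fin d → ℤ)) (w : (Fin d → ℤ) → ℝ) : Prop :=
  ∀ p ∈ latticePolytope n a,
    toricBetaW n a A w p • p = ∑ m ∈ A, (w m * toricBeta n a m p) • coeZ m

/-- The restriction of `h_i` to the line `p + t v`, as a polynomial in `t`. -/
def linePoly {r : ℕ} (n : Fin r → Fin 2 → ℤ) (a : Fin r → ℤ) (p v : Fin 2 → ℝ) (i : Fin r) :
    Polynomial ℝ :=
  Polynomial.C (hR n a i p) + Polynomial.C (∑ l, v l * (n i l : ℝ)) * Polynomial.X

/-- The restriction of `β_m` to the line `p + t v`. -/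
def betaPoly {r : ℕ} (n : Fin r → Fin 2 → ℤ) (a : Fin r → ℤ) (p v : Fin 2 → ℝ)
    (m : Fin 2 → ℤ) : Polynomial ℝ :=
  ∏ i, linePoly n a p v i ^ (hZ n a i m).toNat

lemma hR_line {r : ℕ} (n : Fin r → Fin 2 → ℤ) (a : Fin r → ℤ) (p v : Fin 2 → ℝ) (i : Fin r)
    (t : ℝ) : hR n a i (p + t • v) = hR n a i p + (∑ l, v l * (n i l : ℝ)) * t := by
  simp only [hR, Fin.sum_univ_two, Pi.add_apply, Pi.smul_apply, smul_eq_mul]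
  ring

lemma linePoly_eval {r : ℕ} (n : Fin r → Fin 2 → ℤ) (a : Fin r → ℤ) (p v : Fin 2 → ℝ)
    (i : Fin r) (t : ℝ) : (linePoly n a p v i).eval t = hR n a i (p + t • v) := by
  rw [hR_line]; simp [linePoly]

lemma betaPoly_eval {r : ℕ} (n : Fin r → Fin 2 → ℤ) (a : Fin r → ℤ) (p v : Fin 2 → ℝ)
    (m : Fin 2 → ℤ) (t : ℝ) :
    (betaPoly n a p v m).eval t = toricBeta n a m (p + t • v) := by
  simp [betaPoly, toricBeta, Polynomial.eval_prod, linePoly_eval]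

lemma hR_coeZ {r : ℕ} (n : Fin r → Fin 2 → ℤ) (a : Fin r → ℤ) (i : Fin r) (m : Fin 2 → ℤ) :
    hR n a i (coeZ m) = (hZ n a i m : ℝ) := by
  simp [hR, hZ, coeZ]

/-- Strict linear precision, read through `h_i`. -/
lemma slp_h {r : ℕ} {n : Fin r → Fin 2 → ℤ} {a : Fin r → ℤ} {A : Finset (Fin 2 → ℤ)}
    {w : (Fin 2 → ℤ) → ℝ} (hslp : StrictLinearPrecision n a A w) (i : Fin r)
    (p : Fin 2 → ℝ) (hp : p ∈ latticePolytope n a) :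
    ∑ m ∈ A, w m * toricBeta n a m p * (hZ n a i m : ℝ) = toricBetaW n a A w p * hR n a i p := by
  have h := hslp p hp
  have h0 := congrFun h 0
  have h1 := congrFun h 1
  simp only [Pi.smul_apply, smul_eq_mul, Finset.sum_apply, coeZ] at h0 h1
  have e : ∀ m ∈ A, w m * toricBeta n a m p * (hZ n a i m : ℝ)
      = w m * toricBeta n a m p * (m 0 : ℝ) * n i 0 + w m * toricBeta n a m p * (m 1 : ℝ) * n i 1
        + w m * toricBeta n a m p * a i := by
    intro m _
    simp only [hZ, Fin.sum_univ_two]; push_cast; ring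
  rw [Finset.sum_congr rfl e, Finset.sum_add_distrib, Finset.sum_add_distrib, ← Finset.sum_mul,
    ← Finset.sum_mul, ← Finset.sum_mul, ← h0, ← h1]
  simp only [hR, Fin.sum_univ_two, toricBetaW]
  ring

/-- Near an interior point, the line stays in the polytope. -/
lemma line_mem {r : ℕ} (n : Fin r → Fin 2 → ℤ) (a : Fin r → ℤ) (p v : Fin 2 → ℝ)
    (hp : ∀ i, 0 < hR n a i p) : {t : ℝ | p + t • v ∈ latticePolytope n a}.Infinite := by
  have : ∀ᶠ t in nhds (0 : ℝ), p + t • v ∈ latticePolytope n a := by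
    simp only [latticePolytope, Set.mem_ofPred_eq]
    rw [Filter.eventually_all]
    intro i
    have hc : ContinuousAt (fun t : ℝ => hR n a i (p + t • v)) 0 := by
      simp only [hR_line]; fun_prop
    have := hc.eventually_const_lt (u := 0) (by simpa using hp i)
    filter_upwards [this] with t ht using ht.le
  exact infinite_of_mem_nhds 0 this

/-- The polynomial form of strict linear precision along a line. -/
lemma slp_poly {r : ℕ} {n : Fin r → Fin 2 → ℤ} {a : Fin r → ℤ} {A : Finset (Fin 2 → ℤ)}
    {w : (Fin 2 → ℤ) → ℝ} (hslp : StrictLinearPrecision n a A w) (i : Fin r)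
    (p v : Fin 2 → ℝ) (hp : ∀ i, 0 < hR n a i p) :
    ∑ m ∈ A, Polynomial.C (w m * (hZ n a i m : ℝ)) * betaPoly n a p v m
      = (∑ m ∈ A, Polynomial.C (w m) * betaPoly n a p v m) * linePoly n a p v i := by
  apply Polynomial.eq_of_infinite_eval_eq
  apply (line_mem n a p v hp).mono
  intro t ht
  have := slp_h hslp i _ ht
  simp only [Set.mem_ofPred_eq, Polynomial.eval_mul, Polynomial.eval_finsetSum, Polynomial.eval_C,
    betaPoly_eval, linePoly_eval]
  rw [toricBetaW] at this
  rw [← this]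
  exact Finset.sum_congr rfl fun m _ => by ring

lemma slp_deriv {r : ℕ} {n : Fin r → Fin 2 → ℤ} {a : Fin r → ℤ} {A : Finset (Fin 2 → ℤ)}
    {w : (Fin 2 → ℤ) → ℝ} (hA : ∀ m ∈ A, ∀ i, 0 ≤ hZ n a i m)
    (hslp : StrictLinearPrecision n a A w)
    (p v : Fin 2 → ℝ) (hp : ∀ i, 0 < hR n a i p) :
    Polynomial.derivative (∑ m ∈ A, Polynomial.C (w m) * betaPoly n a p v m)
      = Polynomial.C (∑ i, ∑ l, v l * (n i l : ℝ)) *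
        (∑ m ∈ A, Polynomial.C (w m) * betaPoly n a p v m) := by
  classical
  set G := ∑ m ∈ A, Polynomial.C (w m) * betaPoly n a p v m with hG
  let D : (Fin 2 → ℤ) → Fin r → Polynomial ℝ := fun m i =>
    (∏ k ∈ univ.erase i, linePoly n a p v k ^ (hZ n a k m).toNat) *
      (Polynomial.C ((hZ n a i m).toNat : ℝ) * linePoly n a p v i ^ ((hZ n a i m).toNat - 1))
  have hD : ∀ m ∈ A, ∀ i, D m i * linePoly n a p v i
      = Polynomial.C (hZ n a i m : ℝ) * betaPoly n a p v m := by
    intro m hm i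
    have hb : betaPoly n a p v m = linePoly n a p v i ^ (hZ n a i m).toNat *
        (∏ k ∈ univ.erase i, linePoly n a p v k ^ (hZ n a k m).toNat) := by
      rw [betaPoly, Finset.mul_prod_erase _ (fun k => linePoly n a p v k ^ (hZ n a k m).toNat)
        (mem_univ i)]
    obtain ⟨e, he⟩ := Int.eq_ofNat_of_zero_le (hA m hm i)
    simp only [D]
    rw [hb, he]
    rcases e with _ | e
    · simp
    · simp only [Int.toNat_natCast, Nat.add_sub_cancel, Int.cast_natCast]
      ring
  have hne : ∀ i, linePoly n a p v i ≠ 0 := by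
    intro i h
    have := linePoly_eval n a p v i 0
    rw [h] at this
    simp at this
    exact (hp i).ne this
  have hS : ∀ i, ∑ m ∈ A, Polynomial.C (w m) * D m i = G := by
    intro i
    apply mul_right_cancel₀ (hne i)
    rw [hG, ← slp_poly hslp i p v hp, Finset.sum_mul]
    apply Finset.sum_congr rfl
    intro m hm
    rw [mul_assoc, hD m hm i, Polynomial.C_mul]; ring
  have hder : ∀ m, Polynomial.derivative (betaPoly n a p v m)
      = ∑ i, Polynomial.C (∑ l, v l * (n i l : ℝ)) * D m i := by
    intro m
    rw [betaPoly, Polynomial.derivative_prod_finset]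
    apply Finset.sum_congr rfl
    intro i _
    have : Polynomial.derivative (linePoly n a p v i) = Polynomial.C (∑ l, v l * (n i l : ℝ)) := by
      simp only [linePoly, Polynomial.derivative_add, Polynomial.derivative_C,
        Polynomial.derivative_C_mul, Polynomial.derivative_X, zero_add, mul_one]
    rw [Polynomial.derivative_pow, this]
    simp only [D]
    ring
  rw [hG, Polynomial.derivative_sum]
  simp only [Polynomial.derivative_C_mul, hder, Finset.mul_sum]
  rw [Finset.sum_comm]
  rw [← Finset.mul_sum, ← hG, map_sum, Finset.sum_mul]
  apply Finset.sum_congr rfl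
  intro i _
  rw [← hS i, Finset.mul_sum]
  apply Finset.sum_congr rfl
  intro m _
  ring

lemma betaW_line {r : ℕ} (n : Fin r → Fin 2 → ℤ) (a : Fin r → ℤ) (A : Finset (Fin 2 → ℤ))
    (w : (Fin 2 → ℤ) → ℝ) (p v : Fin 2 → ℝ) (t : ℝ) :
    (∑ m ∈ A, Polynomial.C (w m) * betaPoly n a p v m).eval t
      = toricBetaW n a A w (p + t • v) := by
  simp [Polynomial.eval_finsetSum, betaPoly_eval, toricBetaW]

lemma poly_deriv_eq {g : Polynomial ℝ} (hg : g ≠ 0) {c : ℝ}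
    (h : Polynomial.derivative g = Polynomial.C c * g) : c = 0 := by
  by_contra hc
  have h1 : (Polynomial.C c * g).degree = g.degree := Polynomial.degree_C_mul hc
  have h2 := Polynomial.degree_derivative_lt hg
  rw [h, h1] at h2
  exact lt_irrefl _ h2

/-- Main analytic facts: normals sum to zero, `β_w` constant, linear precision everywhere. -/
lemma slp_const {r : ℕ} {n : Fin r → Fin 2 → ℤ} {a : Fin r → ℤ} {A : Finset (Fin 2 → ℤ)}
    {w : (Fin 2 → ℤ) → ℝ} (hA : ∀ m ∈ A, ∀ i, 0 ≤ hZ n a i m) (hne : A.Nonempty)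
    (hw : ∀ m ∈ A, 0 < w m) (hslp : StrictLinearPrecision n a A w)
    (p : Fin 2 → ℝ) (hp : ∀ i, 0 < hR n a i p) :
    (∀ l, ∑ i, n i l = 0) ∧ ∃ c : ℝ, 0 < c ∧ (∀ q, toricBetaW n a A w q = c) ∧
      ∀ i q, ∑ m ∈ A, w m * toricBeta n a m q * (hZ n a i m : ℝ) = c * hR n a i q := by
  have hpos : 0 < toricBetaW n a A w p :=
    Finset.sum_pos (fun m hm => mul_pos (hw m hm) (Finset.prod_pos fun i _ => pow_pos (hp i) _)) hne
  have hG0 : ∀ v, (∑ m ∈ A, Polynomial.C (w m) * betaPoly n a p v m) ≠ 0 := by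
    intro v h
    have := betaW_line n a A w p v 0
    rw [h] at this
    simp at this
    exact hpos.ne this
  have hz : ∀ v : Fin 2 → ℝ, (∑ i, ∑ l, v l * (n i l : ℝ)) = 0 := fun v =>
    poly_deriv_eq (hG0 v) (slp_deriv hA hslp p v hp)
  have hc : ∀ q, toricBetaW n a A w q = toricBetaW n a A w p := by
    intro q
    have hd := slp_deriv hA hslp p (q - p) hp
    rw [hz, Polynomial.C_0, zero_mul] at hd
    have hk := Polynomial.eq_C_of_derivative_eq_zero hd
    have e1 := betaW_line n a A w p (q - p) 1
    have e0 := betaW_line n a A w p (q - p) 0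
    rw [hk, Polynomial.eval_C] at e1 e0
    simp only [one_smul, zero_smul, add_zero, add_sub_cancel] at e1 e0
    rw [← e1, ← e0]
  refine ⟨?_, toricBetaW n a A w p, hpos, hc, ?_⟩
  · intro l
    have := hz (Pi.single l 1)
    have h2 : ∀ i, ∑ k, (Pi.single l (1 : ℝ) : Fin 2 → ℝ) k * (n i k : ℝ) = n i l := by
      intro i
      simp [Pi.single_apply]
    simp only [h2] at this
    exact_mod_cast this
  · intro i q
    have h := congrArg (Polynomial.eval 1) (slp_poly hslp i p (q - p) hp)
    simp only [linePoly_eval, one_smul, add_sub_cancel, Polynomial.eval_finsetSum, Polynomial.eval_mul,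
      Polynomial.eval_C, betaPoly_eval] at h
    rw [← hc q, toricBetaW, ← h]
    exact Finset.sum_congr rfl fun m _ => by ring

/-- Intersection point of two facet lines. -/
lemma exists_meet {r : ℕ} (n : Fin r → Fin 2 → ℤ) (a : Fin r → ℤ) {i k : Fin r}
    (hd : n i 0 * n k 1 - n i 1 * n k 0 ≠ 0) (x y : ℝ) :
    ∃ q, hR n a i q = x ∧ hR n a k q = y := by
  have hd' : (n i 0 * n k 1 - n i 1 * n k 0 : ℝ) ≠ 0 := by exact_mod_cast hd
  obtain ⟨e, he⟩ : ∃ e : ℝ, (n i 0 * n k 1 - n i 1 * n k 0 : ℝ) * e = 1 :=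
    ⟨_, mul_inv_cancel₀ hd'⟩
  refine ⟨![((x - a i) * n k 1 - (y - a k) * n i 1) * e,
    ((y - a k) * n i 0 - (x - a i) * n k 0) * e], ?_, ?_⟩
  · simp only [hR, Fin.sum_univ_two, Matrix.cons_val_zero, Matrix.cons_val_one]
    linear_combination (x - a i) * he
  · simp only [hR, Fin.sum_univ_two, Matrix.cons_val_zero, Matrix.cons_val_one]
    linear_combination (y - a k) * he

lemma exists_zero {r : ℕ} {n : Fin r → Fin 2 → ℤ} {a : Fin r → ℤ} {A : Finset (Fin 2 → ℤ)}
    {w : (Fin 2 → ℤ) → ℝ} (hA : ∀ m ∈ A, ∀ i, 0 ≤ hZ n a i m) {c : ℝ} (hc : 0 < c)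
    (hconst : ∀ q, toricBetaW n a A w q = c) {i k : Fin r}
    (hd : n i 0 * n k 1 - n i 1 * n k 0 ≠ 0) :
    ∃ m ∈ A, hZ n a i m = 0 ∧ hZ n a k m = 0 := by
  obtain ⟨q, hq1, hq2⟩ := exists_meet n a hd 0 0
  by_contra! hcon
  have h := hconst q
  rw [toricBetaW, Finset.sum_eq_zero] at h
  · exact hc.ne h
  · intro m hm
    have : toricBeta n a m q = 0 := by
      by_cases h0 : hZ n a i m = 0
      · have h1 := hcon m hm h0
        have h2 := hA m hm k
        apply Finset.prod_eq_zero (mem_univ k)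
        rw [hq2]
        exact zero_pow (by omega)
      · have h2 := hA m hm i
        apply Finset.prod_eq_zero (mem_univ i)
        rw [hq1]
        exact zero_pow (by omega)
    rw [this, mul_zero]

lemma exists_one {r : ℕ} {n : Fin r → Fin 2 → ℤ} {a : Fin r → ℤ} {A : Finset (Fin 2 → ℤ)}
    {w : (Fin 2 → ℤ) → ℝ} (hA : ∀ m ∈ A, ∀ i, 0 ≤ hZ n a i m) {c : ℝ} (hc : 0 < c)
    (hlin : ∀ i q, ∑ m ∈ A, w m * toricBeta n a m q * (hZ n a i m : ℝ) = c * hR n a i q)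
    {i k : Fin r}
    (hd : n i 0 * n k 1 - n i 1 * n k 0 ≠ 0) :
    ∃ m ∈ A, hZ n a i m = 1 ∧ hZ n a k m = 0 := by
  obtain ⟨q, hq1, hq2⟩ := exists_meet n a hd 0 0
  have hd' : (n i 0 * n k 1 - n i 1 * n k 0 : ℝ) ≠ 0 := by exact_mod_cast hd
  by_contra! hcon
  let v : Fin 2 → ℝ := ![(n k 1 : ℝ), -(n k 0 : ℝ)]
  have hvi : ∑ l, v l * (n i l : ℝ) = n i 0 * n k 1 - n i 1 * n k 0 := by
    simp [v, Fin.sum_univ_two]; ring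
  have hvk : ∑ l, v l * (n k l : ℝ) = 0 := by
    simp [v, Fin.sum_univ_two]; ring
  have hLi : linePoly n a q v i
      = Polynomial.C (n i 0 * n k 1 - n i 1 * n k 0 : ℝ) * Polynomial.X := by
    rw [linePoly, hvi, hq1, Polynomial.C_0, zero_add]
  have hLk : linePoly n a q v k = 0 := by
    rw [linePoly, hvk, hq2]; simp
  have hpoly : ∑ m ∈ A, Polynomial.C (w m * (hZ n a i m : ℝ)) * betaPoly n a q v m
      = Polynomial.C (c * (n i 0 * n k 1 - n i 1 * n k 0)) * Polynomial.X := by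
    apply Polynomial.funext
    intro t
    have := hlin i (q + t • v)
    rw [hR_line, hq1, hvi] at this
    simp only [Polynomial.eval_mul, Polynomial.eval_finsetSum, Polynomial.eval_C, betaPoly_eval,
      Polynomial.eval_X]
    rw [show c * (↑(n i 0) * ↑(n k 1) - ↑(n i 1) * ↑(n k 0)) * t
      = c * (0 + (↑(n i 0) * ↑(n k 1) - ↑(n i 1) * ↑(n k 0)) * t) by ring, ← this]
    exact Finset.sum_congr rfl fun m _ => by ring
  have hdvd : (Polynomial.X : Polynomial ℝ) ^ 2 ∣
      ∑ m ∈ A, Polynomial.C (w m * (hZ n a i m : ℝ)) * betaPoly n a q v m := by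
    apply Finset.dvd_sum
    intro m hm
    have p1 := hA m hm i
    have p2 := hA m hm k
    by_cases h0 : hZ n a i m = 0
    · simp [h0]
    · by_cases hk : hZ n a k m = 0
      · have h1 : hZ n a i m ≠ 1 := fun h => hcon m hm h hk
        apply Dvd.dvd.mul_left
        refine dvd_trans ?_ (Finset.dvd_prod_of_mem _ (mem_univ i))
        rw [hLi, mul_pow]
        apply Dvd.dvd.mul_left
        exact pow_dvd_pow _ (by omega)
      · have : betaPoly n a q v m = 0 := by
          apply Finset.prod_eq_zero (mem_univ k)
          rw [hLk]
          exact zero_pow (by omega)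
        simp [this]
  rw [hpoly, Polynomial.X_pow_dvd_iff] at hdvd
  have := hdvd 1 (by norm_num)
  rw [Polynomial.coeff_C_mul, Polynomial.coeff_X_one, mul_one] at this
  exact mul_ne_zero hc.ne' hd' this

/-- Compactness forces two independent normals. -/
lemma exists_indep {r : ℕ} {n : Fin r → Fin 2 → ℤ} {a : Fin r → ℤ}
    (hcpt : IsCompact (latticePolytope n a)) (hne : (latticePolytope n a).Nonempty) :
    ∃ i k, n i 0 * n k 1 - n i 1 * n k 0 ≠ 0 := by
  by_contra! hcon
  have hv : ∃ v : Fin 2 → ℝ, v ≠ 0 ∧ ∀ i, ∑ l, v l * (n i l : ℝ) = 0 := by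
    by_cases h : ∃ i, n i ≠ 0
    · obtain ⟨i, hi⟩ := h
      refine ⟨![(n i 1 : ℝ), -(n i 0 : ℝ)], ?_, ?_⟩
      · intro h
        apply hi
        have h0 := congrFun h 0
        have h1 := congrFun h 1
        simp at h0 h1
        funext l
        fin_cases l
        · simpa using h1
        · simpa using h0
      · intro k
        have := hcon i k
        have h' : (n i 0 * n k 1 - n i 1 * n k 0 : ℝ) = 0 := by exact_mod_cast this
        simp [Fin.sum_univ_two]
        linarith
    · push Not at h
      refine ⟨![1, 0], ?_, ?_⟩
      · intro h
        have h0 := congrFun h 0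
        simp at h0
      · intro i; simp [h i]
  obtain ⟨v, hv0, hv⟩ := hv
  obtain ⟨p, hp⟩ := hne
  have hmem : ∀ t : ℝ, p + t • v ∈ latticePolytope n a := by
    intro t i
    rw [hR_line, hv, zero_mul, add_zero]
    exact hp i
  obtain ⟨R, hR⟩ := hcpt.isBounded.exists_norm_le
  have hvn : 0 < ‖v‖ := norm_pos_iff.mpr hv0
  have h1 := hR _ (hmem ((R + ‖p‖ + 1) / ‖v‖))
  have h2 := hR _ hp
  have h3 : ‖((R + ‖p‖ + 1) / ‖v‖) • v‖ = R + ‖p‖ + 1 := by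
    rw [norm_smul, Real.norm_of_nonneg]
    · field_simp
    · have := norm_nonneg p
      apply div_nonneg <;> linarith
  have h4 := norm_le_add_norm_add' p (((R + ‖p‖ + 1) / ‖v‖) • v)
  rw [h3] at h4
  linarith

lemma sum_neg_one {ι : Type*} [DecidableEq ι] {s : Finset ι} {f : ι → ℤ} (hf : ∀ l ∈ s, f l ≤ 0)
    (h : ∑ l ∈ s, f l = -1) : ∃ l ∈ s, f l = -1 ∧ ∀ k ∈ s, k ≠ l → f k = 0 := by
  have : ∃ l ∈ s, f l ≠ 0 := by
    apply Finset.exists_ne_zero_of_sum_ne_zero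
    rw [h]; norm_num
  obtain ⟨l, hl, hl0⟩ := this
  have h1 := Finset.add_sum_erase s f hl
  have h2 : ∀ k ∈ s.erase l, f k ≤ 0 := fun k hk => hf k (Finset.mem_of_mem_erase hk)
  have h3 := Finset.sum_nonpos h2
  have h4 := hf l hl
  have h5 : ∑ k ∈ s.erase l, f k = 0 := by omega
  refine ⟨l, hl, by omega, ?_⟩
  intro k hk hkl
  exact (Finset.sum_eq_zero_iff_of_nonpos h2).mp h5 k (Finset.mem_erase.mpr ⟨hkl, hk⟩)

/-- A full-dimensional lattice polygon in `ℝ²` with strict linear precision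
for some positive weights is, up to an affine unimodular transformation `x ↦ Mx + b` with
`M ∈ GL₂(ℤ)` and `b ∈ ℤ²`, either a dilated standard triangle `kΔ₂` (`k ≥ 1`) or a rectangle
`[0,k] × [0,ℓ]` (`k, ℓ ≥ 1`). -/
theorem slp_polygon_classification {r : ℕ}
    (n : Fin r → Fin 2 → ℤ) (a : Fin r → ℤ) (A : Finset (Fin 2 → ℤ))
    (hP : IsFacetPresentation n a A)
    (w : (Fin 2 → ℤ) → ℝ) (hw : ∀ m ∈ A, 0 < w m)
    (hslp : StrictLinearPrecision n a A w) :
    ∃ (M : Matrix (Fin 2) (Fin 2) ℤ) (b : Fin 2 → ℤ), IsUnit M.det ∧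
      ((∃ k : ℕ, 1 ≤ k ∧
          (fun x : Fin 2 → ℝ => fun l => (∑ j, (M l j : ℝ) * x j) + (b l : ℝ)) ''
              latticePolytope n a =
            {p : Fin 2 → ℝ | 0 ≤ p 0 ∧ 0 ≤ p 1 ∧ p 0 + p 1 ≤ (k : ℝ)}) ∨
       (∃ k l : ℕ, 1 ≤ k ∧ 1 ≤ l ∧
          (fun x : Fin 2 → ℝ => fun l' => (∑ j, (M l' j : ℝ) * x j) + (b l' : ℝ)) ''
              latticePolytope n a =
            {p : Fin 2 → ℝ | 0 ≤ p 0 ∧ p 0 ≤ (k : ℝ) ∧ 0 ≤ p 1 ∧ p 1 ≤ (l : ℝ)})) := by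
  classical
  obtain ⟨hcpt, hint, hmemA, hhull, hirr⟩ := hP
  have hPne : (latticePolytope n a).Nonempty := hint.mono interior_subset
  have hA : ∀ m ∈ A, ∀ i, 0 ≤ hZ n a i m := by
    intro m hm i
    have := (hmemA m).mp hm i
    rw [hR_coeZ] at this
    exact_mod_cast this
  have hAne : A.Nonempty := by
    rw [hhull, convexHull_nonempty_iff] at hPne
    exact Finset.coe_nonempty.mp hPne.of_image
  obtain ⟨i, k, hd⟩ := exists_indep hcpt hPne
  have hik : i ≠ k := by
    rintro rfl
    apply hd; ring
  -- an interior point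
  obtain ⟨p₀, hp₀⟩ : ∃ p, ∀ l, 0 < hR n a l p := by
    obtain ⟨p, hpP, hp0, hp⟩ := hirr i
    obtain ⟨q, hqP, hq0, hq⟩ := hirr k
    refine ⟨p + (1 / 2 : ℝ) • (q - p), fun l => ?_⟩
    have e : hR n a l (p + (1 / 2 : ℝ) • (q - p)) = (hR n a l p + hR n a l q) / 2 := by
      simp only [hR, Fin.sum_univ_two, Pi.add_apply, Pi.smul_apply, Pi.sub_apply, smul_eq_mul]
      ring
    rw [e]
    have a1 := hpP l
    have a2 := hqP l
    by_cases hl : l = i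
    · have := hq l (by rw [hl]; exact hik)
      linarith
    · have := hp l hl
      linarith
  obtain ⟨hsum, c, hc, hconst, hlin⟩ := slp_const hA hAne hw hslp p₀ hp₀
  have hd' : n k 0 * n i 1 - n k 1 * n i 0 ≠ 0 := fun h => hd (by linarith)
  obtain ⟨m0, hm0, hm0i, hm0k⟩ := exists_zero hA hc hconst hd
  obtain ⟨m1, hm1, hm1i, hm1k⟩ := exists_one hA hc hlin hd
  obtain ⟨m2, hm2, hm2k, hm2i⟩ := exists_one hA hc hlin hd'
  have eZ : ∀ l m, hZ n a l m = m 0 * n l 0 + m 1 * n l 1 + a l := by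
    intro l m; simp [hZ, Fin.sum_univ_two]
  have eR : ∀ l p, hR n a l p = p 0 * n l 0 + p 1 * n l 1 + a l := by
    intro l p; simp [hR, Fin.sum_univ_two]
  -- coordinates
  let x0 := m1 0 - m0 0
  let x1 := m1 1 - m0 1
  let y0 := m2 0 - m0 0
  let y1 := m2 1 - m0 1
  have q1 : x0 * n i 0 + x1 * n i 1 = 1 := by
    rw [eZ] at hm0i hm1i; simp only [x0, x1]; linarith
  have q2 : x0 * n k 0 + x1 * n k 1 = 0 := by
    rw [eZ] at hm0k hm1k; simp only [x0, x1]; linarith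
  have q3 : y0 * n i 0 + y1 * n i 1 = 0 := by
    rw [eZ] at hm0i hm2i; simp only [y0, y1]; linarith
  have q4 : y0 * n k 0 + y1 * n k 1 = 1 := by
    rw [eZ] at hm0k hm2k; simp only [y0, y1]; linarith
  have hdet : (n i 0 * n k 1 - n i 1 * n k 0) * (x0 * y1 - x1 * y0) = 1 := by
    have : (n i 0 * n k 1 - n i 1 * n k 0) * (x0 * y1 - x1 * y0)
      = (x0 * n i 0 + x1 * n i 1) * (y0 * n k 0 + y1 * n k 1)
        - (x0 * n k 0 + x1 * n k 1) * (y0 * n i 0 + y1 * n i 1) := by ring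
    rw [this, q1, q2, q3, q4]; norm_num
  let α : Fin r → ℤ := fun l => x0 * n l 0 + x1 * n l 1
  let β : Fin r → ℤ := fun l => y0 * n l 0 + y1 * n l 1
  have hmat : (!![x0, x1; y0, y1] : Matrix (Fin 2) (Fin 2) ℤ) * !![n i 0, n k 0; n i 1, n k 1]
      = 1 := by
    rw [Matrix.mul_fin_two, q1, q2, q3, q4, Matrix.one_fin_two]
  have hmat2 := mul_eq_one_comm.mp hmat
  rw [Matrix.mul_fin_two, Matrix.one_fin_two] at hmat2
  have t00 : n i 0 * x0 + n k 0 * y0 = 1 := by simpa using congrFun (congrFun hmat2 0) 0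
  have t01 : n i 0 * x1 + n k 0 * y1 = 0 := by simpa using congrFun (congrFun hmat2 0) 1
  have t10 : n i 1 * x0 + n k 1 * y0 = 0 := by simpa using congrFun (congrFun hmat2 1) 0
  have t11 : n i 1 * x1 + n k 1 * y1 = 1 := by simpa using congrFun (congrFun hmat2 1) 1
  have hn0 : ∀ l, n l 0 = α l * n i 0 + β l * n k 0 := by
    intro l
    simp only [α, β]
    linear_combination (-(n l 0)) * t00 - (n l 1) * t01
  have hn1 : ∀ l, n l 1 = α l * n i 1 + β l * n k 1 := by
    intro l
    simp only [α, β]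
    linear_combination (-(n l 0)) * t10 - (n l 1) * t11
  have hαi : α i = 1 := q1
  have hαk : α k = 0 := q2
  have hβi : β i = 0 := q3
  have hβk : β k = 1 := q4
  have hαsum : ∑ l, α l = 0 := by
    simp only [α, Finset.sum_add_distrib, ← Finset.mul_sum, hsum]; simp
  have hβsum : ∑ l, β l = 0 := by
    simp only [β, Finset.sum_add_distrib, ← Finset.mul_sum, hsum]; simp
  let g : Fin r → ℤ := fun l => hZ n a l m0
  have hZd : ∀ l m, hZ n a l m = α l * hZ n a i m + β l * hZ n a k m + g l := by
    intro l m
    simp only [g]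
    have e1 := hm0i
    have e2 := hm0k
    rw [eZ] at e1 e2
    simp only [eZ]
    rw [hn0 l, hn1 l]
    linear_combination (-(α l)) * e1 - (β l) * e2
  have hRd : ∀ l p, hR n a l p = α l * hR n a i p + β l * hR n a k p + g l := by
    intro l p
    have e1 : (m0 0 * n i 0 + m0 1 * n i 1 + a i : ℝ) = 0 := by
      rw [eZ] at hm0i; exact_mod_cast hm0i
    have e2 : (m0 0 * n k 0 + m0 1 * n k 1 + a k : ℝ) = 0 := by
      rw [eZ] at hm0k; exact_mod_cast hm0k
    simp only [g]
    simp only [eZ, eR]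
    rw [hn0 l, hn1 l]
    push_cast
    linear_combination (-(α l : ℝ)) * e1 - (β l : ℝ) * e2
  have hg : ∀ l, l ≠ i → l ≠ k → 0 < g l := by
    intro l hli hlk
    have h0 : 0 ≤ g l := hA m0 hm0 l
    rcases h0.lt_or_eq with h | h
    · exact h
    exfalso
    obtain ⟨p, -, p0, pp⟩ := hirr l
    obtain ⟨u, -, u0, uu⟩ := hirr i
    obtain ⟨z, -, z0, zz⟩ := hirr k
    have p1 := pp i hli.symm
    have p2 := pp k hlk.symm
    have u1 := uu l hli
    have u2 := uu k hik.symm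
    have z1 := zz l hlk
    have z2 := zz i hik
    rw [hRd l, ← h] at p0 u1 z1
    rw [u0] at u1
    rw [z0] at z1
    simp only [Int.cast_zero, mul_zero, add_zero, zero_add] at p0 u1 z1
    have hb : (0 : ℝ) < β l := by
      by_contra hb; push Not at hb; nlinarith
    have ha : (0 : ℝ) < α l := by
      by_contra hb; push Not at hb; nlinarith
    nlinarith [mul_pos ha p1, mul_pos hb p2]
  have hα : ∀ l, l ≠ i → l ≠ k → α l ≤ 0 := by
    intro l hli hlk
    by_contra! hpos
    have hdl : n l 0 * n k 1 - n l 1 * n k 0 ≠ 0 := by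
      have : n l 0 * n k 1 - n l 1 * n k 0 = α l * (n i 0 * n k 1 - n i 1 * n k 0) := by
        rw [hn0 l, hn1 l]; ring
      rw [this]
      exact mul_ne_zero hpos.ne' hd
    obtain ⟨m, hm, e1, e2⟩ := exists_zero hA hc hconst hdl
    have e3 := hA m hm i
    rw [hZd l, e2] at e1
    nlinarith [hg l hli hlk, mul_nonneg hpos.le e3]
  have hβ : ∀ l, l ≠ i → l ≠ k → β l ≤ 0 := by
    intro l hli hlk
    by_contra! hpos
    have hdl : n i 0 * n l 1 - n i 1 * n l 0 ≠ 0 := by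
      have : n i 0 * n l 1 - n i 1 * n l 0 = β l * (n i 0 * n k 1 - n i 1 * n k 0) := by
        rw [hn0 l, hn1 l]; ring
      rw [this]
      exact mul_ne_zero hpos.ne' hd
    obtain ⟨m, hm, e2, e1⟩ := exists_zero hA hc hconst hdl
    have e3 := hA m hm k
    rw [hZd l, e2] at e1
    nlinarith [hg l hli hlk, mul_nonneg hpos.le e3]
  have hαβ : ∀ l, l ≠ i → l ≠ k → α l ≠ 0 ∨ β l ≠ 0 := by
    intro l hli hlk
    by_contra! hz
    obtain ⟨p, -, p0, -⟩ := hirr l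
    rw [hRd l, hz.1, hz.2] at p0
    simp only [Int.cast_zero, zero_mul, zero_add] at p0
    have : (0 : ℝ) < g l := by exact_mod_cast hg l hli hlk
    exact this.ne' p0
  let S : Finset (Fin r) := (univ.erase i).erase k
  have hS : ∀ l, l ∈ S ↔ l ≠ k ∧ l ≠ i := by intro l; simp [S]
  have hsplit : ∀ f : Fin r → ℤ, ∑ l, f l = f i + (f k + ∑ l ∈ S, f l) := by
    intro f
    rw [Finset.add_sum_erase _ f (by simp [hik.symm]), Finset.add_sum_erase _ f (mem_univ i)]
  have hαS : ∑ l ∈ S, α l = -1 := by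
    have := hsplit α; rw [hαsum, hαi, hαk] at this; omega
  have hβS : ∑ l ∈ S, β l = -1 := by
    have := hsplit β; rw [hβsum, hβi, hβk] at this; omega
  obtain ⟨s, hs, hs1, hs2⟩ := sum_neg_one (fun l hl => hα l ((hS l).mp hl).2 ((hS l).mp hl).1) hαS
  obtain ⟨t, ht, ht1, ht2⟩ := sum_neg_one (fun l hl => hβ l ((hS l).mp hl).2 ((hS l).mp hl).1) hβS
  have hST : ∀ l, l = i ∨ l = k ∨ l = s ∨ l = t := by
    intro l
    by_contra! hl
    have hlS : l ∈ S := (hS l).mpr ⟨hl.2.1, hl.1⟩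
    rcases hαβ l hl.1 hl.2.1 with h | h
    · exact h (hs2 l hlS hl.2.2.1)
    · exact h (ht2 l hlS hl.2.2.2)
  have hgs := hg s ((hS s).mp hs).2 ((hS s).mp hs).1
  have hgt := hg t ((hS t).mp ht).2 ((hS t).mp ht).1
  have hMap : (fun x : Fin 2 → ℝ => fun l => (∑ j, ((!![n i 0, n i 1; n k 0, n k 1] :
      Matrix (Fin 2) (Fin 2) ℤ) l j : ℝ) * x j) + ((![a i, a k] : Fin 2 → ℤ) l : ℝ))
      = fun x => ![hR n a i x, hR n a k x] := by
    funext x l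
    fin_cases l
    · simp [hR, Fin.sum_univ_two]; ring
    · simp [hR, Fin.sum_univ_two]; ring
  have hmemP : ∀ p, p ∈ latticePolytope n a ↔
      0 ≤ hR n a i p ∧ 0 ≤ hR n a k p ∧ 0 ≤ hR n a s p ∧ 0 ≤ hR n a t p := by
    intro p
    refine ⟨fun h => ⟨h i, h k, h s, h t⟩, fun h l => ?_⟩
    rcases hST l with rfl | rfl | rfl | rfl
    exacts [h.1, h.2.1, h.2.2.1, h.2.2.2]
  refine ⟨!![n i 0, n i 1; n k 0, n k 1], ![a i, a k], ?_, ?_⟩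
  · rw [Matrix.det_fin_two_of]
    exact IsUnit.of_mul_eq_one _ hdet
  rw [hMap]
  by_cases hst : s = t
  · left
    subst hst
    refine ⟨(g s).toNat, by omega, ?_⟩
    have hcast : (((g s).toNat : ℕ) : ℝ) = (g s : ℝ) := by
      exact_mod_cast congrArg (Int.cast (R := ℝ)) (Int.toNat_of_nonneg hgs.le)
    rw [hcast]
    ext y
    simp only [Set.mem_image, Set.mem_ofPred_eq, hmemP]
    constructor
    · rintro ⟨p, ⟨h1, h2, h3, -⟩, rfl⟩
      rw [hRd s, hs1, ht1] at h3
      push_cast at h3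
      refine ⟨by simpa using h1, by simpa using h2, ?_⟩
      simp only [Matrix.cons_val_zero, Matrix.cons_val_one]
      linarith
    · rintro ⟨h1, h2, h3⟩
      obtain ⟨q, hq1, hq2⟩ := exists_meet n a hd (y 0) (y 1)
      have h4 : 0 ≤ hR n a s q := by
        rw [hRd s, hs1, ht1, hq1, hq2]; push_cast; linarith
      refine ⟨q, ⟨by rwa [hq1], by rwa [hq2], h4, h4⟩, ?_⟩
      rw [hq1, hq2]
      funext l; fin_cases l <;> rfl
  · right
    have e1 : β s = 0 := ht2 s hs hst
    have e2 : α t = 0 := hs2 t ht (Ne.symm hst)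
    refine ⟨(g s).toNat, (g t).toNat, by omega, by omega, ?_⟩
    have hcast : (((g s).toNat : ℕ) : ℝ) = (g s : ℝ) := by
      exact_mod_cast congrArg (Int.cast (R := ℝ)) (Int.toNat_of_nonneg hgs.le)
    have hcast2 : (((g t).toNat : ℕ) : ℝ) = (g t : ℝ) := by
      exact_mod_cast congrArg (Int.cast (R := ℝ)) (Int.toNat_of_nonneg hgt.le)
    rw [hcast, hcast2]
    ext y
    simp only [Set.mem_image, Set.mem_ofPred_eq, hmemP]
    constructor
    · rintro ⟨p, ⟨h1, h2, h3, h4⟩, rfl⟩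
      rw [hRd s, hs1, e1] at h3
      rw [hRd t, e2, ht1] at h4
      push_cast at h3 h4
      simp only [Matrix.cons_val_zero, Matrix.cons_val_one]
      refine ⟨h1, ?_, h2, ?_⟩ <;> linarith
    · rintro ⟨h1, h2, h3, h4⟩
      obtain ⟨q, hq1, hq2⟩ := exists_meet n a hd (y 0) (y 1)
      refine ⟨q, ⟨by rwa [hq1], by rwa [hq2], ?_, ?_⟩, ?_⟩
      · rw [hRd s, hs1, e1, hq1, hq2]; push_cast; linarith
      · rw [hRd t, e2, ht1, hq1, hq2]; push_cast; linarith
      · rw [hq1, hq2]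
        funext l; fin_cases l <;> rfl
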